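/- arXiv:2206.03663 — 4 statements merged into one kernel-verified Lean document; each statement's English description precedes it below -/
import Mathlib

section
/- Let $N \geq 3$ be a natural number and $m_0 > 0$. Let $M : [0,\infty) \to \mathbb{R}$ be continuous with $M(t) \geq m_0$ for all $t \geq 0$ and $\lim_{t \to +\infty} M(t)/t^{2/(N-2)} = 0$. Let $\bar\delta > 0$, $A > 0$, and let $h : (0,\bar\delta) \to (0,\infty)$ be continuous with $\lim_{\delta \to 0^+} h(\delta)/\delta^{N-2} = A$. Then there exist $K > 0$ and $\varepsilon_1 > 0$ such that for every $\varepsilon \in (0,\varepsilon_1)$ there exists $\delta_\varepsilon \in (0,\bar\delta)$ with $\varepsilon^2\, M\big(\varepsilon^{2-N} h(\delta_\varepsilon)\big) = \delta_\varepsilon^{\,2}$ and $\sqrt{m_0}\,\varepsilon \leq \delta_\varepsilon \leq K\varepsilon$. -/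
open MeasureTheory Filter

theorem stmt2 (N : ℕ) (hN : 3 ≤ N) (m₀ : ℝ) (hm₀ : 0 < m₀)
    (M : ℝ → ℝ) (hMcont : ContinuousOn M (Set.Ici 0))
    (hM1 : ∀ t : ℝ, 0 ≤ t → m₀ ≤ M t)
    (hM3 : Tendsto (fun t : ℝ => M t / t ^ ((2 : ℝ) / ((N : ℝ) - 2))) atTop (nhds 0))
    (δbar A : ℝ) (hδbar : 0 < δbar) (hA : 0 < A)
    (h : ℝ → ℝ) (hhcont : ContinuousOn h (Set.Ioo 0 δbar))
    (hhpos : ∀ δ ∈ Set.Ioo (0 : ℝ) δbar, 0 < h δ)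
    (hlim : Tendsto (fun δ : ℝ => h δ / δ ^ ((N : ℝ) - 2)) (nhdsWithin 0 (Set.Ioi 0))
      (nhds A)) :
    ∃ K > 0, ∃ ε₁ > 0, ∀ ε ∈ Set.Ioo (0 : ℝ) ε₁, ∃ δε ∈ Set.Ioo (0 : ℝ) δbar,
      ε ^ 2 * M (ε ^ ((2 : ℝ) - (N : ℝ)) * h δε) = δε ^ 2 ∧
      Real.sqrt m₀ * ε ≤ δε ∧ δε ≤ K * ε := by
  have hN' : (3 : ℝ) ≤ (N : ℝ) := by exact_mod_cast hN
  obtain ⟨p, hp⟩ : ∃ p : ℝ, p = (N : ℝ) - 2 := ⟨_, rfl⟩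
  have hp0 : 0 < p := by rw [hp]; linarith
  have hneg : (2 : ℝ) - (N : ℝ) = -p := by rw [hp]; ring
  rw [← hp] at hM3 hlim
  rw [hneg]
  have e1 : ∀ᶠ δ in nhdsWithin (0 : ℝ) (Set.Ioi 0),
      h δ / δ ^ p ∈ Set.Ioo (A / 2) (2 * A) :=
    hlim (Ioo_mem_nhds (by linarith) (by linarith))
  obtain ⟨η₀, hη₀, hη₀'⟩ := mem_nhdsGT_iff_exists_Ioo_subset.1 e1
  have hη₀p : 0 < η₀ := hη₀
  have hc : 0 < (2 * A) ^ (2 / p) := Real.rpow_pos_of_pos (by linarith) _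
  have e2 : ∀ᶠ t : ℝ in atTop, M t / t ^ (2 / p) < 1 / (2 * A) ^ (2 / p) :=
    hM3 (Iio_mem_nhds (by positivity))
  obtain ⟨T₀, hT₀⟩ := eventually_atTop.1 e2
  obtain ⟨T, hTdef⟩ : ∃ T : ℝ, T = max T₀ 1 := ⟨_, rfl⟩
  have hT1 : 1 ≤ T := hTdef ▸ le_max_right _ _
  have hTT : T₀ ≤ T := hTdef ▸ le_max_left _ _
  have hs : 0 < Real.sqrt m₀ := Real.sqrt_pos.2 hm₀
  obtain ⟨K, hK⟩ : ∃ K : ℝ, K = max (Real.sqrt m₀) ((2 * T / A) ^ (1 / p)) := ⟨_, rfl⟩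
  have hK1 : Real.sqrt m₀ ≤ K := hK ▸ le_max_left _ _
  have hK2 : (2 * T / A) ^ (1 / p) ≤ K := hK ▸ le_max_right _ _
  have hK0 : 0 < K := hs.trans_le hK1
  have hKp : 2 * T / A ≤ K ^ p := by
    have hb : 0 ≤ 2 * T / A := by positivity
    have := Real.rpow_le_rpow (Real.rpow_nonneg hb _) hK2 hp0.le
    rwa [← Real.rpow_mul hb, one_div_mul_cancel hp0.ne', Real.rpow_one] at this
  obtain ⟨η, hη⟩ : ∃ η : ℝ, η = min η₀ δbar := ⟨_, rfl⟩
  have hη1 : η ≤ η₀ := hη ▸ min_le_left _ _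
  have hη2 : η ≤ δbar := hη ▸ min_le_right _ _
  have hηp : 0 < η := hη ▸ lt_min hη₀p hδbar
  refine ⟨K, hK0, η / K, by positivity, ?_⟩
  rintro ε ⟨hε, hε1⟩
  have hKε : K * ε < η := by
    rw [lt_div_iff₀ hK0] at hε1
    linarith
  have hεp : 0 < ε ^ (-p) := Real.rpow_pos_of_pos hε _
  have hle : Real.sqrt m₀ * ε ≤ K * ε := by gcongr
  have hsub : Set.Icc (Real.sqrt m₀ * ε) (K * ε) ⊆ Set.Ioo 0 δbar := by
    rintro x ⟨hx1, hx2⟩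
    have : 0 < Real.sqrt m₀ * ε := by positivity
    exact ⟨by linarith, by linarith⟩
  have hcont : ContinuousOn (fun δ => δ ^ 2 - ε ^ 2 * M (ε ^ (-p) * h δ))
      (Set.Icc (Real.sqrt m₀ * ε) (K * ε)) := by
    refine ContinuousOn.sub (by fun_prop) (continuousOn_const.mul ?_)
    refine hMcont.comp (continuousOn_const.mul (hhcont.mono hsub)) ?_
    intro x hx
    exact (mul_pos hεp (hhpos x (hsub hx))).le
  have hlow : (Real.sqrt m₀ * ε) ^ 2 - ε ^ 2 * M (ε ^ (-p) * h (Real.sqrt m₀ * ε)) ≤ 0 := by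
    have h1 := hM1 _ (mul_pos hεp (hhpos _ (hsub (Set.left_mem_Icc.2 hle)))).le
    rw [mul_pow, Real.sq_sqrt hm₀.le]
    have := mul_le_mul_of_nonneg_left h1 (sq_nonneg ε)
    linarith
  have hKε0 : 0 < K * ε := by positivity
  have hup : 0 ≤ (K * ε) ^ 2 - ε ^ 2 * M (ε ^ (-p) * h (K * ε)) := by
    obtain ⟨h1, h2⟩ := hη₀' (show K * ε ∈ Set.Ioo 0 η₀ from ⟨hKε0, by linarith⟩)
    have hden : 0 < (K * ε) ^ p := Real.rpow_pos_of_pos hKε0 _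
    rw [lt_div_iff₀ hden] at h1
    rw [div_lt_iff₀ hden] at h2
    have hid : ε ^ (-p) * (K * ε) ^ p = K ^ p := by
      rw [Real.mul_rpow hK0.le hε.le, Real.rpow_neg hε.le]
      have : ε ^ p ≠ 0 := (Real.rpow_pos_of_pos hε _).ne'
      field_simp
    obtain ⟨t, ht⟩ : ∃ t, t = ε ^ (-p) * h (K * ε) := ⟨_, rfl⟩
    have g1 : A / 2 * K ^ p ≤ t := by
      have := mul_le_mul_of_nonneg_left h1.le hεp.le
      rw [ht, ← hid]; linarith
    have g2 : t ≤ 2 * A * K ^ p := by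
      have := mul_le_mul_of_nonneg_left h2.le hεp.le
      rw [ht, ← hid]; linarith
    have g3 : T ≤ t := by
      rw [div_le_iff₀ hA] at hKp
      linarith
    have ht0 : 0 < t := by linarith
    have g4 := hT₀ t (hTT.trans g3)
    have htp : 0 < t ^ (2 / p) := Real.rpow_pos_of_pos ht0 _
    rw [div_lt_div_iff₀ htp hc] at g4
    have g5 : t ^ (2 / p) ≤ (2 * A) ^ (2 / p) * K ^ 2 := by
      have := Real.rpow_le_rpow ht0.le g2 (show 0 ≤ 2 / p by positivity)
      rw [Real.mul_rpow (by positivity) (Real.rpow_nonneg hK0.le _), ← Real.rpow_mul hK0.le,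
        mul_div_cancel₀ _ hp0.ne'] at this
      simpa using this
    have g6 : M t ≤ K ^ 2 := by
      by_contra! hcon
      have := mul_lt_mul_of_pos_left hcon hc
      linarith
    rw [← ht, mul_pow]
    have := mul_le_mul_of_nonneg_left g6 (sq_nonneg ε)
    linarith
  obtain ⟨δ, hδ, hδ0⟩ := intermediate_value_Icc hle hcont ⟨hlow, hup⟩
  refine ⟨δ, hsub hδ, ?_, hδ.1, hδ.2⟩
  simp only at hδ0
  linarith
end

section
/- Let $N \in \{1,2\}$ and $m_0 > 0$. Let $M : [0,\infty) \to \mathbb{R}$ be continuous with $M(t) \geq m_0$ for all $t \geq 0$. Let $\bar\delta > 0$, $A > 0$, and let $h : (0,\bar\delta) \to (0,\infty)$ be continuous with $\lim_{\delta \to 0^+} h(\delta)/\delta^{N-2} = A$. Then there exist $K > 0$ and $\varepsilon_1 > 0$ such that for every $\varepsilon \in (0,\varepsilon_1)$ there exists $\delta_\varepsilon \in (0,\bar\delta)$ with $\varepsilon^2\, M\big(\varepsilon^{2-N} h(\delta_\varepsilon)\big) = \delta_\varepsilon^{\,2}$ and $\sqrt{m_0}\,\varepsilon \leq \delta_\varepsilon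 \leq K\varepsilon$. -/
open MeasureTheory Filter

theorem stmt3 (N : ℕ) (hN : N = 1 ∨ N = 2) (m₀ : ℝ) (hm₀ : 0 < m₀)
    (M : ℝ → ℝ) (hMcont : ContinuousOn M (Set.Ici 0))
    (hM1 : ∀ t : ℝ, 0 ≤ t → m₀ ≤ M t)
    (δbar A : ℝ) (hδbar : 0 < δbar) (hA : 0 < A)
    (h : ℝ → ℝ) (hhcont : ContinuousOn h (Set.Ioo 0 δbar))
    (hhpos : ∀ δ ∈ Set.Ioo (0 : ℝ) δbar, 0 < h δ)
    (hlim : Tendsto (fun δ : ℝ => h δ / δ ^ ((N : ℝ) - 2)) (nhdsWithin 0 (Set.Ioi 0))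
      (nhds A)) :
    ∃ K > 0, ∃ ε₁ > 0, ∀ ε ∈ Set.Ioo (0 : ℝ) ε₁, ∃ δε ∈ Set.Ioo (0 : ℝ) δbar,
      ε ^ 2 * M (ε ^ ((2 : ℝ) - (N : ℝ)) * h δε) = δε ^ 2 ∧
      Real.sqrt m₀ * ε ≤ δε ∧ δε ≤ K * ε := by
  obtain ⟨p, hp, hp0⟩ : ∃ p : ℝ, p = 2 - (N : ℝ) ∧ 0 ≤ p := by
    refine ⟨_, rfl, ?_⟩
    rcases hN with rfl | rfl <;> norm_num
  have hp' : (N : ℝ) - 2 = -p := by rw [hp]; ring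
  rw [← hp]
  rw [hp'] at hlim
  have hs : 0 < Real.sqrt m₀ := Real.sqrt_pos.mpr hm₀
  have hss : Real.sqrt m₀ ^ 2 = m₀ := Real.sq_sqrt hm₀.le
  generalize Real.sqrt m₀ = s at *
  have hev := hlim.eventually (eventually_lt_nhds (show A < A + 1 by linarith))
  rw [eventually_nhdsWithin_iff, Metric.eventually_nhds_iff] at hev
  obtain ⟨d, hd, hdh⟩ := hev
  obtain ⟨C, hC⟩ := (isCompact_Icc (a := (0 : ℝ)) (b := (A + 1) * (1 / s) ^ p)).bddAbove_image
    (hMcont.mono (fun x hx => hx.1))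
  have hC' : ∀ t, 0 ≤ t → t ≤ (A + 1) * (1 / s) ^ p → M t ≤ C := fun t h0 h1 =>
    hC ⟨t, ⟨h0, h1⟩, rfl⟩
  have hC0 : 0 < C := by
    have h1 := hC' 0 le_rfl (by positivity)
    have h2 := hM1 0 le_rfl
    linarith
  have hK : 0 < s + C + 1 := by positivity
  refine ⟨s + C + 1, hK, min d δbar / (s + C + 1), by positivity, ?_⟩
  rintro ε ⟨hε, hε1⟩
  rw [lt_div_iff₀ hK, lt_min_iff] at hε1
  obtain ⟨hεd, hεb⟩ := hε1
  have hsub : ∀ δ ∈ Set.Icc (s * ε) ((s + C + 1) * ε), δ ∈ Set.Ioo 0 δbar := by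
    intro δ hδ
    have : 0 < s * ε := by positivity
    exact ⟨by linarith [hδ.1], by linarith [hδ.2]⟩
  have hεp : 0 < ε ^ p := Real.rpow_pos_of_pos hε p
  have harg : ∀ δ ∈ Set.Icc (s * ε) ((s + C + 1) * ε), 0 ≤ ε ^ p * h δ := fun δ hδ =>
    (mul_pos hεp (hhpos δ (hsub δ hδ))).le
  have hle : s * ε ≤ (s + C + 1) * ε := by gcongr; linarith
  have hcont : ContinuousOn (fun δ => ε ^ 2 * M (ε ^ p * h δ) - δ ^ 2)
      (Set.Icc (s * ε) ((s + C + 1) * ε)) := by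
    refine ContinuousOn.sub (continuousOn_const.mul ?_) (by fun_prop)
    exact hMcont.comp (continuousOn_const.mul (hhcont.mono hsub)) harg
  have hfa : 0 ≤ ε ^ 2 * M (ε ^ p * h (s * ε)) - (s * ε) ^ 2 := by
    have := hM1 _ (harg (s * ε) ⟨le_rfl, hle⟩)
    have h3 := mul_le_mul_of_nonneg_left this (sq_nonneg ε)
    rw [mul_pow, hss]
    linarith
  have hfb : ε ^ 2 * M (ε ^ p * h ((s + C + 1) * ε)) - ((s + C + 1) * ε) ^ 2 ≤ 0 := by
    have hmem : (s + C + 1) * ε ∈ Set.Icc (s * ε) ((s + C + 1) * ε) := ⟨hle, le_rfl⟩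
    have hpos := (hsub _ hmem).1
    have hb : ε ^ p * h ((s + C + 1) * ε) ≤ (A + 1) * (1 / s) ^ p := by
      have h1 := hdh (y := (s + C + 1) * ε)
        (by rw [Real.dist_eq, sub_zero, abs_of_pos hpos]; linarith) hpos
      rw [div_lt_iff₀ (Real.rpow_pos_of_pos hpos _), Real.rpow_neg hpos.le] at h1
      have h2 : ε ^ p * (((s + C + 1) * ε) ^ p)⁻¹ ≤ (1 / s) ^ p := by
        rw [← div_eq_mul_inv, ← Real.div_rpow hε.le hpos.le]
        refine Real.rpow_le_rpow (by positivity) ?_ hp0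
        rw [div_le_div_iff₀ hpos hs]
        linarith
      calc _ ≤ ε ^ p * ((A + 1) * (((s + C + 1) * ε) ^ p)⁻¹) := by gcongr
        _ = (A + 1) * (ε ^ p * (((s + C + 1) * ε) ^ p)⁻¹) := by ring
        _ ≤ _ := by gcongr
    have h4 := hC' _ (harg _ hmem) hb
    have h5 : C ≤ (s + C + 1) ^ 2 := by nlinarith
    have h6 := mul_le_mul_of_nonneg_left (h4.trans h5) (sq_nonneg ε)
    rw [mul_pow]
    linarith
  obtain ⟨δ, hδ, hz⟩ := intermediate_value_Icc' hle hcont ⟨hfb, hfa⟩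
  exact ⟨δ, hsub δ hδ, sub_eq_zero.mp hz, hδ.1, hδ.2⟩
end

section
/- Let $N \geq 4$ be a natural number and let $a, b > 0$. Let $A > 0$ be such that $\inf_{t > 0}\,\big(a + b A\, t^{N-2} - t^2\big) < 0$. Let $\bar\delta > 0$ and let $h : (0,\bar\delta) \to (0,\infty)$ be continuous with $\lim_{\delta \to 0^+} h(\delta)/\delta^{N-2} = A$. Then there exist $K > 0$ and $\varepsilon_1 > 0$ such that for every $\varepsilon \in (0,\varepsilon_1)$ there exists $\delta_\varepsilon \in (0,\bar\delta)$ with $\varepsilon^2\big(a + b\,\varepsilon^{2-N} h(\delta_\varepsilon)\big) = \delta_\varepsilon^{\,2}$ and $\sqrt{a}\,\varepsilon \leq \delta_\varepsilon \leq K\varepsilon$. -/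
open MeasureTheory Filter

theorem stmt4 (N : ℕ) (hN : 4 ≤ N) (a b : ℝ) (ha : 0 < a) (hb : 0 < b)
    (A : ℝ) (hA : 0 < A)
    (hinf : sInf ((fun t : ℝ => a + b * A * t ^ ((N : ℝ) - 2) - t ^ 2) '' Set.Ioi 0) < 0)
    (δbar : ℝ) (hδbar : 0 < δbar)
    (h : ℝ → ℝ) (hhcont : ContinuousOn h (Set.Ioo 0 δbar))
    (hhpos : ∀ δ ∈ Set.Ioo (0 : ℝ) δbar, 0 < h δ)
    (hlim : Tendsto (fun δ : ℝ => h δ / δ ^ ((N : ℝ) - 2)) (nhdsWithin 0 (Set.Ioi 0))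
      (nhds A)) :
    ∃ K > 0, ∃ ε₁ > 0, ∀ ε ∈ Set.Ioo (0 : ℝ) ε₁, ∃ δε ∈ Set.Ioo (0 : ℝ) δbar,
      ε ^ 2 * (a + b * (ε ^ ((2 : ℝ) - (N : ℝ)) * h δε)) = δε ^ 2 ∧
      Real.sqrt a * ε ≤ δε ∧ δε ≤ K * ε := by
  have hex : ∃ t : ℝ, 0 < t ∧ a + b * A * t ^ ((N : ℝ) - 2) - t ^ 2 < 0 := by
    by_contra hc
    push Not at hc
    apply absurd hinf
    rw [not_lt]
    apply Real.sInf_nonneg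
    rintro _ ⟨t, ht, rfl⟩
    exact hc t ht
  obtain ⟨T, hT, hneg⟩ := hex
  have hTp : 0 < T ^ ((N : ℝ) - 2) := Real.rpow_pos_of_pos hT _
  have haT : Real.sqrt a ≤ T := by
    rw [Real.sqrt_le_left hT.le]
    have : 0 < b * A * T ^ ((N : ℝ) - 2) := by positivity
    linarith
  have hsa : 0 < Real.sqrt a := Real.sqrt_pos.2 ha
  have hlim2 : Tendsto (fun δ : ℝ => a + b * (h δ / δ ^ ((N : ℝ) - 2)) * T ^ ((N : ℝ) - 2) - T ^ 2)
      (nhdsWithin 0 (Set.Ioi 0)) (nhds (a + b * A * T ^ ((N : ℝ) - 2) - T ^ 2)) :=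
    (((hlim.const_mul b).mul_const _).const_add a).sub_const _
  have hev := hlim2.eventually (gt_mem_nhds hneg)
  obtain ⟨η, hη, hsub⟩ := mem_nhdsGT_iff_exists_Ioo_subset.1 hev
  have hη : 0 < η := hη
  refine ⟨T, hT, min η δbar / T, by positivity, ?_⟩
  rintro ε ⟨hε, hε1⟩
  rw [lt_div_iff₀ hT, lt_min_iff, mul_comm] at hε1
  obtain ⟨h1, h2⟩ := hε1
  have hTε : 0 < T * ε := by positivity
  have hle : Real.sqrt a * ε ≤ T * ε := by gcongr
  have hsε : 0 < Real.sqrt a * ε := by positivity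
  have hIcc : Set.Icc (Real.sqrt a * ε) (T * ε) ⊆ Set.Ioo 0 δbar := fun x hx =>
    ⟨hsε.trans_le hx.1, hx.2.trans_lt h2⟩
  have hcont : ContinuousOn (fun δ => ε ^ 2 * (a + b * (ε ^ ((2 : ℝ) - (N : ℝ)) * h δ)) - δ ^ 2)
      (Set.Icc (Real.sqrt a * ε) (T * ε)) := by
    have := hhcont.mono hIcc
    fun_prop
  have hεp : 0 < ε ^ ((2 : ℝ) - (N : ℝ)) := Real.rpow_pos_of_pos hε _
  have hend : a + b * (h (T * ε) / (T * ε) ^ ((N : ℝ) - 2)) * T ^ ((N : ℝ) - 2) - T ^ 2 < 0 :=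
    hsub ⟨hTε, h1⟩
  have hkey : h (T * ε) / (T * ε) ^ ((N : ℝ) - 2) * T ^ ((N : ℝ) - 2)
      = ε ^ ((2 : ℝ) - (N : ℝ)) * h (T * ε) := by
    rw [Real.mul_rpow hT.le hε.le, show (2 : ℝ) - N = -((N : ℝ) - 2) by ring, Real.rpow_neg hε.le]
    have := Real.rpow_pos_of_pos hε ((N : ℝ) - 2)
    field_simp
  rw [mul_assoc, hkey] at hend
  have h0 : (0 : ℝ) ∈ Set.Icc
      (ε ^ 2 * (a + b * (ε ^ ((2 : ℝ) - (N : ℝ)) * h (T * ε))) - (T * ε) ^ 2)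
      (ε ^ 2 * (a + b * (ε ^ ((2 : ℝ) - (N : ℝ)) * h (Real.sqrt a * ε))) - (Real.sqrt a * ε) ^ 2) := by
    constructor
    · have := mul_neg_of_pos_of_neg (pow_pos hε 2) hend
      linarith
    · rw [mul_pow, Real.sq_sqrt ha.le]
      have hp := hhpos _ (hIcc ⟨le_rfl, hle⟩)
      have : 0 < ε ^ 2 * (b * (ε ^ ((2 : ℝ) - (N : ℝ)) * h (Real.sqrt a * ε))) := by positivity
      linarith
  obtain ⟨δ, hδ, hz⟩ := intermediate_value_Icc' hle hcont h0
  exact ⟨δ, hIcc hδ, sub_eq_zero.1 hz, hδ.1, hδ.2⟩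
end

section
/- Let $N \geq 3$ be a natural number, let $2 < \ell < 2^* := 2N/(N-2)$, let $\sigma > 0$ and $C_\ell > 0$. Let $M : [0,\infty) \to \mathbb{R}$ satisfy $M(t) \geq \sigma\, t^{2/(N-2)}$ for all $t \geq 0$, and let $f : \mathbb{R} \to \mathbb{R}$ be such that for every $\eta > 0$ there exists $C_\eta > 0$ with $|f(s)s| \leq \eta s^2 + C_\eta |s|^\ell$ for all $s \in \mathbb{R}$. Then there exists $V_0 > 0$, depending only on $N, \ell, \sigma, C_\ell$ and $f$, with the following property: for every measurable potential $V : \mathbb{R}^N \to \mathbb{R}$ with $V(x) \geq V_0$ for all $x$, and every differentiable function $u : \mathbb{R}^N \to \mathbb{R}$ such that the quantities $X^2 := \int_{\mathbb{R}^N}|\nabla u|^2\,dx$, $Y^2 := \int_{\mathbb{R}^N} u^2\,dx$ and $\int_{\mathbb{R}^N}|u|^\ell\,dx$ are finite, such that the Gagliardo–Nirenberg inequality $\int_{\mathbb{R}^N}|u|^\ell\,dx \leq C_\ell\, X^{N(\ell-2)/2}\, Y^{\ell - N(\ell-2)/2}$ holds, and such that the energy identity $M(X^2)\,X^2 + \int_{\mathbb{R}^N}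 V(x)\,u(x)^2\,dx \,\leq\, \int_{\mathbb{R}^N} f(u(x))\,u(x)\,dx$ holds, one has $u = 0$ almost everywhere on $\mathbb{R}^N$. -/
open MeasureTheory

lemma young_aux (n ℓ σ K : ℝ) (hn : 3 ≤ n) (h1 : 2 < ℓ) (h2 : ℓ < 2 * n / (n - 2))
    (hσ : 0 < σ) (hK : 0 < K) :
    ∃ K' > 0, ∀ A B : ℝ, 0 ≤ A → 0 ≤ B →
      K * (Real.sqrt A ^ (n * (ℓ - 2) / 2) * Real.sqrt B ^ (ℓ - n * (ℓ - 2) / 2)) ≤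
        σ * A ^ (2 / (n - 2)) * A + K' * B := by
  have hn2 : 0 < n - 2 := by linarith
  rw [lt_div_iff₀ hn2] at h2
  set θ : ℝ := (n - 2) * (ℓ - 2) / 4 with hθ
  set τ : ℝ := 1 - θ with hτ
  have hθ0 : 0 < θ := by positivity
  have hτ0 : 0 < τ := by rw [hτ, hθ]; nlinarith
  have hKσ : 0 < K * σ ^ (-θ) := by positivity
  refine ⟨(K * σ ^ (-θ)) ^ (1 / τ), by positivity, fun A B hA hB => ?_⟩
  set K' := (K * σ ^ (-θ)) ^ (1 / τ) with hK'
  have hK'0 : 0 < K' := by positivity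
  have e1 : Real.sqrt A ^ (n * (ℓ - 2) / 2) = (A ^ (2 / (n - 2)) * A) ^ θ := by
    have : A ^ (2 / (n - 2)) * A = A ^ (2 / (n - 2) + 1) := by
      rw [Real.rpow_add_of_nonneg hA (by positivity) (by norm_num), Real.rpow_one]
    rw [this, Real.sqrt_eq_rpow, ← Real.rpow_mul hA, ← Real.rpow_mul hA]
    congr 1
    rw [hθ]; field_simp; ring
  have e2 : Real.sqrt B ^ (ℓ - n * (ℓ - 2) / 2) = B ^ τ := by
    rw [Real.sqrt_eq_rpow, ← Real.rpow_mul hB]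
    congr 1
    rw [hτ, hθ]; ring
  have hP : 0 ≤ A ^ (2 / (n - 2)) * A := by positivity
  have y := Real.geom_mean_le_arith_mean2_weighted hθ0.le hτ0.le
    (mul_nonneg hσ.le hP) (mul_nonneg hK'0.le hB) (by rw [hτ]; ring)
  rw [Real.mul_rpow hσ.le hP, Real.mul_rpow hK'0.le hB] at y
  have e3 : K' ^ τ = K * σ ^ (-θ) := by
    rw [hK', ← Real.rpow_mul hKσ.le, one_div_mul_cancel hτ0.ne', Real.rpow_one]
  have e4 : σ ^ θ * σ ^ (-θ) = 1 := by
    rw [← Real.rpow_add hσ]; simp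
  rw [e1, e2]
  calc _ = σ ^ θ * (A ^ (2 / (n - 2)) * A) ^ θ * (K' ^ τ * B ^ τ) := by
        rw [e3]
        linear_combination (-(K * (A ^ (2 / (n - 2)) * A) ^ θ * B ^ τ)) * e4
    _ ≤ _ := y
    _ ≤ _ := by
        have : 0 ≤ σ * (A ^ (2 / (n - 2)) * A) := by positivity
        have : 0 ≤ K' * B := by positivity
        nlinarith

theorem stmt10 (N : ℕ) (hN : 3 ≤ N) (ℓ : ℝ) (hℓ1 : 2 < ℓ)
    (hℓ2 : ℓ < 2 * (N : ℝ) / ((N : ℝ) - 2))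
    (σ Cℓ : ℝ) (hσ : 0 < σ) (hCℓ : 0 < Cℓ)
    (M : ℝ → ℝ) (hM : ∀ t : ℝ, 0 ≤ t → σ * t ^ ((2 : ℝ) / ((N : ℝ) - 2)) ≤ M t)
    (f : ℝ → ℝ)
    (hf : ∀ η > 0, ∃ Cη > 0, ∀ s : ℝ, |f s * s| ≤ η * s ^ 2 + Cη * |s| ^ ℓ) :
    ∃ V₀ > 0, ∀ V : EuclideanSpace ℝ (Fin N) → ℝ, Measurable V → (∀ x, V₀ ≤ V x) →
      ∀ u : EuclideanSpace ℝ (Fin N) → ℝ, Differentiable ℝ u →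
        Integrable (fun x => ‖fderiv ℝ u x‖ ^ 2) →
        Integrable (fun x => u x ^ 2) →
        Integrable (fun x => |u x| ^ ℓ) →
        Integrable (fun x => V x * u x ^ 2) →
        Integrable (fun x => f (u x) * u x) →
        (∫ x, |u x| ^ ℓ) ≤
          Cℓ * Real.sqrt (∫ x, ‖fderiv ℝ u x‖ ^ 2) ^ ((N : ℝ) * (ℓ - 2) / 2) *
            Real.sqrt (∫ x, u x ^ 2) ^ (ℓ - (N : ℝ) * (ℓ - 2) / 2) →
        M (∫ x, ‖fderiv ℝ u x‖ ^ 2) * (∫ x, ‖fderiv ℝ u x‖ ^ 2) +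
            (∫ x, V x * u x ^ 2) ≤ ∫ x, f (u x) * u x →
        ∀ᵐ x, u x = 0 := by
  obtain ⟨C, hC, hfC⟩ := hf 1 one_pos
  have hN' : (3 : ℝ) ≤ N := by exact_mod_cast hN
  obtain ⟨K', hK', hY⟩ := young_aux N ℓ σ (C * Cℓ) hN' hℓ1 hℓ2 hσ (by positivity)
  refine ⟨2 + K', by positivity, ?_⟩
  intro V _ hV u _ _ iB iL iV iF hGN hE
  set A := ∫ x, ‖fderiv ℝ u x‖ ^ 2 with hA
  set B := ∫ x, u x ^ 2 with hB
  have hA0 : 0 ≤ A := integral_nonneg fun x => by positivity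
  have hB0 : 0 ≤ B := integral_nonneg fun x => by positivity
  have h1 : (2 + K') * B ≤ ∫ x, V x * u x ^ 2 := by
    rw [hB, ← integral_const_mul]
    exact integral_mono (iB.const_mul _) iV
      fun x => mul_le_mul_of_nonneg_right (hV x) (sq_nonneg _)
  have h2 : ∫ x, f (u x) * u x ≤ B + C * ∫ x, |u x| ^ ℓ := by
    rw [hB, ← integral_const_mul, ← integral_add iB (iL.const_mul _)]
    refine integral_mono iF (iB.add (iL.const_mul _)) fun x => ?_
    have := (le_abs_self _).trans (hfC (u x))
    simpa using this
  have h3 := mul_le_mul_of_nonneg_left hGN hC.le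
  have h4 := mul_le_mul_of_nonneg_right (hM A hA0) hA0
  have h5 := hY A B hA0 hB0
  have hBz : B = 0 := by nlinarith
  have := (integral_eq_zero_iff_of_nonneg (fun x => sq_nonneg (u x)) iB).1 hBz
  filter_upwards [this] with x hx
  simpa using hx
end
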